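/- Assume 0 < η_i < 2μ/‖A‖² for i = 1, …, p, that for every n ≥ 0 the iterate x_n^δ is a minimizer of x ↦ R(x) − ⟨ξ_n^δ, x⟩ over X, and that the source condition holds: there exists λ† = (λ_1†, …, λ_p†) ∈ Y such that R(x) ≥ R(x†) + ⟨A^* λ†, x − x†⟩ for all x ∈ X, where x† is the R-minimizing solution of the system A_i x = y_i (i = 1, …, p). Then there exists a positive constant C depending only on μ, ‖A‖² and the η_i such that for all integers n ≥ 0, E[‖x_n^δ − x†‖²] ≤ C (p M₀/(n+1) + (n+1) δ²/p + δ²), where M₀ := Σ_{i=1}^p (1/η_i) ‖λ_i†‖². Consequently, if n_δ is chosen such that (n_δ + 1)/p ~ δ^{−1}, then E[‖x_{n_δ}^δ − x†‖²] = O(δ). -/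

import Mathlib

open scoped RealInnerProductSpace

/-- Expectation with respect to the first `m` i.i.d. uniformly distributed indices:
for a quantity `f` determined by the coordinates `i_0, …, i_{m-1}` of the sample path,
`avg p hp m f = p^{-m} ∑_{(i_0,…,i_{m-1}) ∈ {1,…,p}^m} f`. -/
noncomputable def avg (p : ℕ) (hp : 0 < p) (m : ℕ) (f : (ℕ → Fin p) → ℝ) : ℝ :=
  (∑ σ : Fin m → Fin p, f (fun k => if h : k < m then σ ⟨k, h⟩ else ⟨0, hp⟩)) / (p : ℝ) ^ m

/-- The operator `A : X → Y₁ × ⋯ × Y_p`, `A x = (A₁ x, …, A_p x)`, where the product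
carries the (Hilbertian) `ℓ²`-product norm; `‖fullOp A‖` is the operator norm `‖A‖`. -/
noncomputable def fullOp {p : ℕ} {X : Type} [NormedAddCommGroup X] [NormedSpace ℝ X]
    {Y : Fin p → Type} [∀ i, NormedAddCommGroup (Y i)] [∀ i, NormedSpace ℝ (Y i)]
    (A : ∀ i, X →L[ℝ] Y i) : X →L[ℝ] PiLp 2 Y :=
  (((PiLp.continuousLinearEquiv 2 ℝ fun i => Y i).symm :
      (∀ i, Y i) ≃L[ℝ] PiLp 2 Y) : (∀ i, Y i) →L[ℝ] PiLp 2 Y).comp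
    (ContinuousLinearMap.pi A)

/-- The adjoint `A_i^* : Y_i → X^*` of `A_i : X → Y_i` for a Banach space `X` and a
Hilbert space `Y_i`: `(A_i^* v) x = ⟪v, A_i x⟫`. -/
noncomputable def banachAdjoint {X : Type} [NormedAddCommGroup X] [NormedSpace ℝ X]
    {Yi : Type} [NormedAddCommGroup Yi] [InnerProductSpace ℝ Yi]
    (Ai : X →L[ℝ] Yi) (v : Yi) : X →L[ℝ] ℝ :=
  (innerSL ℝ v).comp Ai

section Averaging

lemma avg_succ (p : ℕ) (hp : 0 < p) (m : ℕ) (f : (ℕ → Fin p) → ℝ) :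
    avg p hp (m + 1) f
      = avg p hp m (fun ω => (∑ i, f (Function.update ω m i)) / p) := by
  have hp' : (p : ℝ) ≠ 0 := by exact_mod_cast hp.ne'
  unfold avg
  rw [← Finset.sum_div, div_div, ← pow_succ']
  congr 1
  rw [← (Fin.snocEquiv (fun _ : Fin (m + 1) => Fin p)).sum_comp, Fintype.sum_prod_type_right]
  refine Finset.sum_congr rfl fun σ _ => Finset.sum_congr rfl fun i _ => ?_
  congr 1
  funext k
  rcases lt_trichotomy k m with h | h | h
  · have h' : k < m + 1 := by omega
    simp [Function.update_of_ne h.ne, h, h', Fin.snocEquiv, Fin.snoc]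
  · subst h
    simp [Fin.snocEquiv, Fin.snoc]
  · have h1 : ¬ k < m + 1 := by omega
    have h2 : ¬ k < m := by omega
    simp [Function.update_of_ne h.ne', h1, h2]

lemma avg_mono (p : ℕ) (hp : 0 < p) (m : ℕ) {f g : (ℕ → Fin p) → ℝ} (h : ∀ ω, f ω ≤ g ω) :
    avg p hp m f ≤ avg p hp m g := by
  unfold avg
  gcongr
  exact h _

lemma avg_mul_add (p : ℕ) (hp : 0 < p) (m : ℕ) (f : (ℕ → Fin p) → ℝ) (a b : ℝ) :
    avg p hp m (fun ω => a * f ω + b) = a * avg p hp m f + b := by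
  have hp' : (p : ℝ) ≠ 0 := by exact_mod_cast hp.ne'
  unfold avg
  rw [Finset.sum_add_distrib, ← Finset.mul_sum]
  simp
  field_simp

lemma avg_succ_of_update_eq (p : ℕ) (hp : 0 < p) (m : ℕ) (f : (ℕ → Fin p) → ℝ)
    (h : ∀ ω i, f (Function.update ω m i) = f ω) :
    avg p hp (m + 1) f = avg p hp m f := by
  have hp' : (p : ℝ) ≠ 0 := by exact_mod_cast hp.ne'
  rw [avg_succ]
  simp [h, hp']

end Averaging

/-- If `x₀` minimizes `R - ξ` and `R` is `μ`-strongly convex, the Bregman distance at `x₀` with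
subgradient `ξ` dominates `μ ‖x - x₀‖ ^ 2`. -/
lemma bregman_lower_bound {X : Type*} [NormedAddCommGroup X] [NormedSpace ℝ X] {R : X → EReal}
    {μ : ℝ} (hbot : ∀ x, R x ≠ ⊥)
    (hconv : ∀ xb x : X, R xb ≠ ⊤ → R x ≠ ⊤ → ∀ t : ℝ, 0 ≤ t → t ≤ 1 →
      R (t • xb + (1 - t) • x) + ((μ * t * (1 - t) * ‖xb - x‖ ^ 2 : ℝ) : EReal)
        ≤ (t : EReal) * R xb + ((1 - t : ℝ) : EReal) * R x)
    {ξ : X →L[ℝ] ℝ} {x₀ : X} (h₀ : R x₀ ≠ ⊤)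
    (hmin : ∀ x, R x₀ + ((ξ (x - x₀) : ℝ) : EReal) ≤ R x) {x : X} (hx : R x ≠ ⊤) :
    (R x₀).toReal + ξ (x - x₀) + μ * ‖x - x₀‖ ^ 2 ≤ (R x).toReal := by
  have key : ∀ t : ℝ, 0 < t → t ≤ 1 →
      ξ (x - x₀) + μ * (1 - t) * ‖x - x₀‖ ^ 2 ≤ (R x).toReal - (R x₀).toReal := by
    intro t ht ht1
    have h1 := hconv x x₀ hx h₀ t ht.le ht1
    have h2 := hmin (t • x + (1 - t) • x₀)
    have h3 := (add_le_add_left h2 _).trans h1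
    rw [← EReal.coe_toReal hx (hbot x), ← EReal.coe_toReal h₀ (hbot x₀)] at h3
    have h4 : t • x + (1 - t) • x₀ - x₀ = t • (x - x₀) := by module
    rw [h4, map_smul, smul_eq_mul] at h3
    norm_cast at h3
    have h5 : t * (ξ (x - x₀) + μ * (1 - t) * ‖x - x₀‖ ^ 2)
        ≤ t * ((R x).toReal - (R x₀).toReal) := by linarith
    exact le_of_mul_le_mul_left h5 ht
  have hlim : Filter.Tendsto (fun t : ℝ => ξ (x - x₀) + μ * (1 - t) * ‖x - x₀‖ ^ 2)
      (nhdsWithin 0 (Set.Ioi 0)) (nhds (ξ (x - x₀) + μ * (1 - 0) * ‖x - x₀‖ ^ 2)) :=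
    ((by fun_prop : Continuous fun t : ℝ =>
      ξ (x - x₀) + μ * (1 - t) * ‖x - x₀‖ ^ 2).tendsto 0).mono_left nhdsWithin_le_nhds
  have := le_of_tendsto hlim (by
    filter_upwards [Ioc_mem_nhdsGT (zero_lt_one' ℝ)] with t ht using key t ht.1 ht.2)
  linarith

lemma sum_norm_sq_le_fullOp {p : ℕ} {X : Type} [NormedAddCommGroup X] [NormedSpace ℝ X]
    {Y : Fin p → Type} [∀ i, NormedAddCommGroup (Y i)] [∀ i, NormedSpace ℝ (Y i)]
    (A : ∀ i, X →L[ℝ] Y i) (x : X) :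
    ∑ i, ‖A i x‖ ^ 2 ≤ ‖fullOp A‖ ^ 2 * ‖x‖ ^ 2 := by
  have h := (fullOp A).le_opNorm x
  have h2 : ‖fullOp A x‖ ^ 2 = ∑ i, ‖A i x‖ ^ 2 := by
    rw [PiLp.norm_sq_eq_of_L2]
    rfl
  rw [← h2, ← mul_pow]
  gcongr

/-- Noise amplification factor: the largest `2 μ η i / (2 μ - η i L)`. -/
noncomputable def noiseFactor {p : ℕ} (μ L : ℝ) (η : Fin p → ℝ) : ℝ :=
  ⨆ i, 2 * μ * η i / (2 * μ - η i * L)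

lemma le_noiseFactor {p : ℕ} (μ L : ℝ) (η : Fin p → ℝ) (i : Fin p) :
    2 * μ * η i / (2 * μ - η i * L) ≤ noiseFactor μ L η :=
  le_ciSup (f := fun i => 2 * μ * η i / (2 * μ - η i * L)) (Set.finite_range _).bddAbove i

/-- Sum over all `i` of the weighted squared distances after a noisy gradient step in the
`i`-th block. -/
lemma sum_weighted_dist_update_le {p : ℕ} {Y : Fin p → Type*} [∀ i, NormedAddCommGroup (Y i)]
    [∀ i, InnerProductSpace ℝ (Y i)] {μ L θ δ : ℝ} {η : Fin p → ℝ} (hL : 0 < L)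
    (hθ : 0 < θ) (hη : ∀ i, 0 < η i) (hηL : ∀ i, η i * L < 2 * μ)
    (z lam g e : ∀ i, Y i) (he : ∑ i, ‖e i‖ ^ 2 ≤ δ ^ 2) (hK : 0 ≤ noiseFactor μ L η) :
    ∑ i, ∑ j, (η j)⁻¹ * ‖Function.update z i (z i - η i • (g i + e i)) j - lam j‖ ^ 2
      ≤ (p + θ) * ∑ j, (η j)⁻¹ * ‖z j - lam j‖ ^ 2 - 2 * ∑ i, ⟪z i - lam i, g i⟫
        + (θ⁻¹ + 1) * noiseFactor μ L η * δ ^ 2 + 2 * μ / L * ∑ i, ‖g i‖ ^ 2 := by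
  set K := noiseFactor μ L η
  have hstep : ∀ i, ∑ j, (η j)⁻¹ * ‖Function.update z i (z i - η i • (g i + e i)) j - lam j‖ ^ 2
      = (∑ j, (η j)⁻¹ * ‖z j - lam j‖ ^ 2) - 2 * ⟪z i - lam i, g i + e i⟫
        + η i * ‖g i + e i‖ ^ 2 := by
    intro i
    rw [← Finset.add_sum_erase _ _ (Finset.mem_univ i),
      ← Finset.add_sum_erase _ (fun j => (η j)⁻¹ * ‖z j - lam j‖ ^ 2) (Finset.mem_univ i)]
    have h1 : ∑ j ∈ Finset.univ.erase i,
        (η j)⁻¹ * ‖Function.update z i (z i - η i • (g i + e i)) j - lam j‖ ^ 2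
        = ∑ j ∈ Finset.univ.erase i, (η j)⁻¹ * ‖z j - lam j‖ ^ 2 :=
      Finset.sum_congr rfl fun j hj => by rw [Function.update_of_ne (Finset.ne_of_mem_erase hj)]
    have h2 : z i - η i • (g i + e i) - lam i = (z i - lam i) - η i • (g i + e i) := by abel
    rw [h1, Function.update_self, h2, norm_sub_sq_real, inner_smul_right, norm_smul,
      Real.norm_eq_abs, mul_pow, sq_abs]
    have := (hη i).ne'
    field_simp
    ring
  have hterm : ∀ i, -(2 * ⟪z i - lam i, g i + e i⟫) + η i * ‖g i + e i‖ ^ 2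
      ≤ θ * ((η i)⁻¹ * ‖z i - lam i‖ ^ 2) - 2 * ⟪z i - lam i, g i⟫
        + (θ⁻¹ + 1) * K * ‖e i‖ ^ 2 + 2 * μ / L * ‖g i‖ ^ 2 := by
    intro i
    have hi := hη i
    have hd : 0 < 2 * μ - η i * L := by linarith [hηL i]
    have hk : 2 * μ * η i / (2 * μ - η i * L) ≤ K := le_noiseFactor μ L η i
    have hηk : η i ≤ 2 * μ * η i / (2 * μ - η i * L) := by
      rw [le_div_iff₀ hd]
      nlinarith [mul_pos (mul_pos hi hi) hL]
    have hcs := abs_le.1 (abs_real_inner_le_norm (z i - lam i) (e i))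
    have hcs2 := (abs_le.1 (abs_real_inner_le_norm (g i) (e i))).2
    have hcross : -(2 * ⟪z i - lam i, e i⟫)
        ≤ θ * ((η i)⁻¹ * ‖z i - lam i‖ ^ 2) + θ⁻¹ * η i * ‖e i‖ ^ 2 := by
      set a := ‖z i - lam i‖
      set b := ‖e i‖
      have hsq : θ * ((η i)⁻¹ * a ^ 2) + θ⁻¹ * η i * b ^ 2 - 2 * (a * b)
          = θ * (η i)⁻¹ * (a - θ⁻¹ * η i * b) ^ 2 := by
        field_simp
        ring
      have : 0 ≤ θ * (η i)⁻¹ * (a - θ⁻¹ * η i * b) ^ 2 := by positivity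
      linarith
    have hquad : η i * ‖g i + e i‖ ^ 2
        ≤ 2 * μ / L * ‖g i‖ ^ 2 + 2 * μ * η i / (2 * μ - η i * L) * ‖e i‖ ^ 2 := by
      rw [norm_add_sq_real]
      set a := ‖g i‖
      set b := ‖e i‖
      have hsq : 2 * μ / L * a ^ 2 + 2 * μ * η i / (2 * μ - η i * L) * b ^ 2
          - η i * (a ^ 2 + 2 * (a * b) + b ^ 2)
          = ((2 * μ - η i * L) / L) * (a - η i * L / (2 * μ - η i * L) * b) ^ 2 := by
        obtain ⟨d, hd'⟩ : ∃ d, 2 * μ - η i * L = d := ⟨_, rfl⟩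
        have hμ : 2 * μ = d + η i * L := by linarith
        rw [hd'] at hd ⊢
        rw [hμ]
        field_simp
        ring
      have h1 : 0 ≤ ((2 * μ - η i * L) / L) * (a - η i * L / (2 * μ - η i * L) * b) ^ 2 := by
        positivity
      have h2 := mul_le_mul_of_nonneg_left hcs2 hi.le
      linarith
    have h3 : θ⁻¹ * η i * ‖e i‖ ^ 2 ≤ θ⁻¹ * K * ‖e i‖ ^ 2 := by
      gcongr
      exact hηk.trans hk
    have h4 : 2 * μ * η i / (2 * μ - η i * L) * ‖e i‖ ^ 2 ≤ K * ‖e i‖ ^ 2 := by gcongr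
    rw [inner_add_right]
    linarith
  have hsum := Finset.sum_le_sum fun i (_ : i ∈ Finset.univ) => hterm i
  have he' : (θ⁻¹ + 1) * K * ∑ i, ‖e i‖ ^ 2 ≤ (θ⁻¹ + 1) * K * δ ^ 2 := by gcongr
  simp only [hstep]
  simp only [Finset.sum_add_distrib, Finset.sum_sub_distrib, ← Finset.mul_sum,
    Finset.sum_neg_distrib, Finset.sum_const, Finset.card_univ, Fintype.card_fin,
    nsmul_eq_mul] at hsum ⊢
  linarith

lemma le_pow_mul_of_recursion {T : ℕ → ℝ} {q B M : ℝ} (hq : 1 ≤ q) (hB : 0 ≤ B)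
    (h0 : T 0 ≤ M) (h : ∀ k, T (k + 1) ≤ q * T k + B) (k : ℕ) :
    T k ≤ q ^ k * (M + k * B) := by
  induction k with
  | zero => simpa using h0
  | succ k ih =>
    have h1 : q * T k ≤ q * (q ^ k * (M + k * B)) := by gcongr
    have h2 : 1 * B ≤ q ^ (k + 1) * B := by
      gcongr
      exact one_le_pow₀ hq
    have := h k
    push_cast
    rw [pow_succ] at h2 ⊢
    linarith

lemma one_add_inv_pow_le_three (N : ℕ) : (1 + (N : ℝ)⁻¹) ^ N ≤ 3 := by
  rcases Nat.eq_zero_or_pos N with rfl | hN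
  · norm_num
  have hN' : (N : ℝ) ≠ 0 := by exact_mod_cast hN.ne'
  calc (1 + (N : ℝ)⁻¹) ^ N ≤ Real.exp ((N : ℝ)⁻¹) ^ N := by
        gcongr
        linarith [Real.add_one_le_exp ((N : ℝ)⁻¹)]
    _ = Real.exp 1 := by rw [← Real.exp_nat_mul, mul_inv_cancel₀ hN']
    _ ≤ 3 := by linarith [Real.exp_one_lt_d9]

/-- Shifted dual variable of the heavy ball iteration; it performs plain block gradient steps. -/
noncomputable def shiftedDual {p : ℕ} {X : Type} [NormedAddCommGroup X] [NormedSpace ℝ X]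
    {Y : Fin p → Type} [∀ i, NormedAddCommGroup (Y i)] [∀ i, InnerProductSpace ℝ (Y i)]
    (A : ∀ i, X →L[ℝ] Y i) (yδ : ∀ i, Y i) (η : Fin p → ℝ) (ω : ℕ → Fin p) (x : ℕ → X) :
    ℕ → ∀ i, Y i
  | 0 => 0
  | n + 1 => Function.update (shiftedDual A yδ η ω x n) (ω n)
      (shiftedDual A yδ η ω x n (ω n) - η (ω n) • (A (ω n) (x n) - yδ (ω n)))

/-- The dual stochastic heavy ball iteration driven by the index sequence `ω`. -/
def IsHeavyBall {p : ℕ} {X : Type} [NormedAddCommGroup X] [NormedSpace ℝ X]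
    {Y : Fin p → Type} [∀ i, NormedAddCommGroup (Y i)] [∀ i, InnerProductSpace ℝ (Y i)]
    (A : ∀ i, X →L[ℝ] Y i) (yδ : ∀ i, Y i) (η : Fin p → ℝ) (ω : ℕ → Fin p)
    (ξ : ℕ → X →L[ℝ] ℝ) (x : ℕ → X) : Prop :=
  ξ 0 = 0 ∧ ∀ n : ℕ, ξ (n + 1) = ξ n
    - (((n : ℝ) + 2)⁻¹ * η (ω n)) • banachAdjoint (A (ω n)) ((A (ω n)) (x n) - yδ (ω n))
    + ((n : ℝ) / ((n : ℝ) + 2)) • (ξ n - ξ (n - 1))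

section HeavyBall

variable {p : ℕ} {X : Type} [NormedAddCommGroup X] [NormedSpace ℝ X]
  {Y : Fin p → Type} [∀ i, NormedAddCommGroup (Y i)] [∀ i, InnerProductSpace ℝ (Y i)]
  {A : ∀ i, X →L[ℝ] Y i} {yδ : ∀ i, Y i} {η : Fin p → ℝ} {ω ω' : ℕ → Fin p}
  {ξ ξ' : ℕ → X →L[ℝ] ℝ} {x x' : ℕ → X}

lemma IsHeavyBall.extrapolation_eq (h : IsHeavyBall A yδ η ω ξ x) (n : ℕ) (v : X) :
    ((n : ℝ) + 1) * ξ n v - n * ξ (n - 1) v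
      = ∑ i, ⟪shiftedDual A yδ η ω x n i, A i v⟫ := by
  induction n with
  | zero => simp [shiftedDual, h.1]
  | succ n ih =>
    have hn : (n : ℝ) + 2 ≠ 0 := by positivity
    have hsum : ∑ i, ⟪shiftedDual A yδ η ω x (n + 1) i, A i v⟫
        = ∑ i, ⟪shiftedDual A yδ η ω x n i, A i v⟫
          - η (ω n) * ⟪A (ω n) (x n) - yδ (ω n), A (ω n) v⟫ := by
      rw [← Finset.add_sum_erase _ _ (Finset.mem_univ (ω n)), ← Finset.add_sum_erase _
        (fun i => ⟪shiftedDual A yδ η ω x n i, A i v⟫) (Finset.mem_univ (ω n))]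
      have h1 : ∑ j ∈ Finset.univ.erase (ω n), ⟪shiftedDual A yδ η ω x (n + 1) j, A j v⟫
          = ∑ j ∈ Finset.univ.erase (ω n), ⟪shiftedDual A yδ η ω x n j, A j v⟫ :=
        Finset.sum_congr rfl fun j hj => by
          rw [shiftedDual, Function.update_of_ne (Finset.ne_of_mem_erase hj)]
      rw [h1, shiftedDual, Function.update_self, inner_sub_left, real_inner_smul_left]
      ring
    rw [hsum, ← ih, h.2 n]
    simp [banachAdjoint, inner_sub_left]
    field_simp
    ring

lemma IsHeavyBall.congr (h : IsHeavyBall A yδ η ω ξ x) (h' : IsHeavyBall A yδ η ω' ξ' x')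
    (hx : ∀ n, ξ n = ξ' n → x n = x' n) {n : ℕ} (hω : ∀ k < n, ω k = ω' k) {m : ℕ} (hm : m ≤ n) :
    ξ m = ξ' m := by
  induction m using Nat.strong_induction_on with
  | _ m ih =>
    match m with
    | 0 => rw [h.1, h'.1]
    | m + 1 =>
      have h1 := ih m (by omega) (by omega)
      have h2 := ih (m - 1) (by omega) (by omega)
      rw [h.2, h'.2, ← hω m (by omega), h1, h2, hx m h1]

lemma shiftedDual_congr {n : ℕ} (hω : ∀ k < n, ω k = ω' k) (hx : ∀ k < n, x k = x' k) :
    shiftedDual A yδ η ω x n = shiftedDual A yδ η ω' x' n := by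
  induction n with
  | zero => rfl
  | succ n ih =>
    rw [shiftedDual, shiftedDual, ih (fun k hk => hω k (by omega)) (fun k hk => hx k (by omega)),
      hω n (by omega), hx n (by omega)]

end HeavyBall

/-- Error bound for the dual stochastic heavy ball method with explicit constant. -/
lemma avg_norm_sq_le {p : ℕ} (hp : 0 < p) {X : Type} [NormedAddCommGroup X] [NormedSpace ℝ X]
    {Y : Fin p → Type} [∀ i, NormedAddCommGroup (Y i)] [∀ i, InnerProductSpace ℝ (Y i)]
    {A : ∀ i, X →L[ℝ] Y i} {μ : ℝ} {R : X → EReal} {yδ : ∀ i, Y i} {δ : ℝ} {η : Fin p → ℝ}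
    {xdag : X} {lamdag : ∀ j, Y j} {ξ : (ℕ → Fin p) → ℕ → X →L[ℝ] ℝ} {xδ : (ℕ → Fin p) → ℕ → X}
    (hμ : 0 < μ) (hbot : ∀ x, R x ≠ ⊥)
    (hconv : ∀ xb x : X, R xb ≠ ⊤ → R x ≠ ⊤ → ∀ t : ℝ, 0 ≤ t → t ≤ 1 →
      R (t • xb + (1 - t) • x) + ((μ * t * (1 - t) * ‖xb - x‖ ^ 2 : ℝ) : EReal)
        ≤ (t : EReal) * R xb + ((1 - t : ℝ) : EReal) * R x)
    (hdag : R xdag ≠ ⊤) (hδ : ∑ i, ‖A i xdag - yδ i‖ ^ 2 ≤ δ ^ 2)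
    (hL : 0 < ‖fullOp A‖ ^ 2) (hη : ∀ i, 0 < η i) (hηL : ∀ i, η i * ‖fullOp A‖ ^ 2 < 2 * μ)
    (hsource : ∀ x : X, R xdag
      + (((∑ i, banachAdjoint (A i) (lamdag i)) (x - xdag) : ℝ) : EReal) ≤ R x)
    (hball : ∀ ω, IsHeavyBall A yδ η ω (ξ ω) (xδ ω))
    (hmin : ∀ ω, ∀ n : ℕ, ∀ x : X,
      R (xδ ω n) - (((ξ ω n) (xδ ω n) : ℝ) : EReal) ≤ R x - (((ξ ω n) x : ℝ) : EReal))
    (n : ℕ) :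
    avg p hp n (fun ω => ‖xδ ω n - xdag‖ ^ 2)
      ≤ 3 / (2 * μ) * (p * (∑ i, (η i)⁻¹ * ‖lamdag i‖ ^ 2) / ((n : ℝ) + 1)
        + noiseFactor μ (‖fullOp A‖ ^ 2) η * (((n : ℝ) + 1) * δ ^ 2 / p + δ ^ 2)) := by
  set K := noiseFactor μ (‖fullOp A‖ ^ 2) η
  have hp0 : (0 : ℝ) < p := by exact_mod_cast hp
  have hK : 0 ≤ K := by
    refine le_trans ?_ (le_noiseFactor μ (‖fullOp A‖ ^ 2) η ⟨0, hp⟩)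
    have := hηL ⟨0, hp⟩
    have := hη ⟨0, hp⟩
    have : 0 < 2 * μ - η ⟨0, hp⟩ * ‖fullOp A‖ ^ 2 := by linarith
    positivity
  have hfin : ∀ ω m, R (xδ ω m) ≠ ⊤ := by
    intro ω m htop
    have h := hmin ω m xdag
    rw [htop, ← EReal.coe_toReal hdag (hbot _)] at h
    norm_cast at h
  have hmin' : ∀ ω m x, R (xδ ω m) + ((ξ ω m (x - xδ ω m) : ℝ) : EReal) ≤ R x := by
    intro ω m x
    by_cases hx : R x = ⊤
    · simp [hx]
    have h := hmin ω m x
    rw [← EReal.coe_toReal hx (hbot _), ← EReal.coe_toReal (hfin ω m) (hbot _)] at h ⊢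
    norm_cast at h ⊢
    rw [map_sub]
    linarith
  have hbreg : ∀ ω m x, R x ≠ ⊤ → (R (xδ ω m)).toReal + ξ ω m (x - xδ ω m)
      + μ * ‖x - xδ ω m‖ ^ 2 ≤ (R x).toReal := fun ω m x hx =>
    bregman_lower_bound hbot hconv (hfin ω m) (hmin' ω m) hx
  have huniq : ∀ ω ω' m, ξ ω m = ξ ω' m → xδ ω m = xδ ω' m := by
    intro ω ω' m h
    have h1 := hbreg ω m _ (hfin ω' m)
    have h2 := hbreg ω' m _ (hfin ω m)
    rw [← h, norm_sub_rev, ← neg_sub, map_neg] at h2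
    have h3 : μ * ‖xδ ω' m - xδ ω m‖ ^ 2 ≤ μ * 0 := by linarith
    have h4 := le_of_mul_le_mul_left h3 hμ
    have h5 : ‖xδ ω' m - xδ ω m‖ = 0 := by
      have := sq_nonneg ‖xδ ω' m - xδ ω m‖
      exact pow_eq_zero_iff (two_ne_zero) |>.1 (le_antisymm h4 this)
    exact (sub_eq_zero.1 (norm_eq_zero.1 h5)).symm
  have hupd : ∀ (ω : ℕ → Fin p) (m : ℕ) i, ∀ k < m, Function.update ω m i k = ω k :=
    fun ω m i k hk => Function.update_of_ne hk.ne _ _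
  have hξu : ∀ ω m i, ∀ k ≤ m, ξ (Function.update ω m i) k = ξ ω k := fun ω m i k hk =>
    (hball _).congr (hball ω) (huniq _ _) (hupd ω m i) hk
  have hxu : ∀ ω m i, ∀ k ≤ m, xδ (Function.update ω m i) k = xδ ω k := fun ω m i k hk =>
    huniq _ _ k (hξu ω m i k hk)
  let z : (ℕ → Fin p) → ℕ → ∀ i, Y i := fun ω => shiftedDual A yδ η ω (xδ ω)
  have hzu : ∀ ω m i, z (Function.update ω m i) (m + 1)
      = Function.update (z ω m) i (z ω m i - η i • (A i (xδ ω m - xdag) + (A i xdag - yδ i))) := by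
    intro ω m i
    have h1 : z (Function.update ω m i) m = z ω m :=
      shiftedDual_congr (hupd ω m i) (fun k hk => hxu ω m i k hk.le)
    have h2 : A i (xδ ω m - xdag) + (A i xdag - yδ i) = A i (xδ ω m) - yδ i := by
      rw [map_sub]; abel
    have h3 : z (Function.update ω m i) (m + 1) = _ := shiftedDual.eq_2 _ _ _ _ _ _
    rw [h3]
    change Function.update (z (Function.update ω m i) m) _
      (z (Function.update ω m i) m _ - _) = _
    rw [h1, hxu ω m i m le_rfl, Function.update_self, h2]
  let Δ : (ℕ → Fin p) → ℕ → ℝ := fun ω m =>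
    (R xdag).toReal - (R (xδ ω m)).toReal - ξ ω m (xdag - xδ ω m)
  have hΔ : ∀ ω m, μ * ‖xδ ω m - xdag‖ ^ 2 ≤ Δ ω m := by
    intro ω m
    have := hbreg ω m xdag hdag
    rw [norm_sub_rev] at this
    simp only [Δ]
    linarith
  have hΔ0 : ∀ ω m, 0 ≤ Δ ω m := fun ω m => le_trans (by positivity) (hΔ ω m)
  have hinner : ∀ ω (m : ℕ), ((m : ℝ) + 1) * Δ ω m - m * Δ ω (m - 1) + μ * ‖xδ ω m - xdag‖ ^ 2
      ≤ ∑ i, ⟪z ω m i - lamdag i, A i (xδ ω m - xdag)⟫ := by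
    intro ω m
    have h1 := (hball ω).extrapolation_eq m (xδ ω m - xdag)
    have h2 := bregman_lower_bound hbot hconv hdag hsource (hfin ω m)
    have h3 := hbreg ω (m - 1) _ (hfin ω m)
    have h3' : (m : ℝ) * ((R (xδ ω (m - 1))).toReal + ξ ω (m - 1) (xδ ω m - xδ ω (m - 1)))
        ≤ m * (R (xδ ω m)).toReal := by
      gcongr
      have : 0 ≤ μ * ‖xδ ω m - xδ ω (m - 1)‖ ^ 2 := by positivity
      linarith
    simp only [sum_apply, banachAdjoint, ContinuousLinearMap.comp_apply,
      innerSL_apply_apply] at h2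
    simp only [inner_sub_left, Finset.sum_sub_distrib]
    change _ ≤ ∑ i, ⟪shiftedDual A yδ η ω (xδ ω) m i, _⟫ - _
    rw [← h1]
    simp only [Δ, map_sub] at h2 h3' ⊢
    linarith
  let Z : (ℕ → Fin p) → ℕ → ℝ := fun ω m => ∑ j, (η j)⁻¹ * ‖z ω m j - lamdag j‖ ^ 2
  have hZ0 : ∀ ω m, 0 ≤ Z ω m := fun ω m =>
    Finset.sum_nonneg fun j _ => mul_nonneg (inv_nonneg.2 (hη j).le) (sq_nonneg _)
  let S : ℕ → (ℕ → Fin p) → ℝ := fun m ω => Z ω m + 2 / p * (m * Δ ω (m - 1))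
  set N : ℝ := ((n + 1 : ℕ) : ℝ) with hN
  have hN0 : 0 < N := by positivity
  set B : ℝ := 1 / p * ((N / p + 1) * K * δ ^ 2) with hB
  have hB0 : 0 ≤ B := by positivity
  have hpath : ∀ m ω, (∑ i, S (m + 1) (Function.update ω m i)) / p ≤ (1 + N⁻¹) * S m ω + B := by
    intro m ω
    have h1 := sum_weighted_dist_update_le (θ := p / N) hL (by positivity) hη hηL (z ω m) lamdag
      (fun i => A i (xδ ω m - xdag)) (fun i => A i xdag - yδ i) hδ hK
    have h2 := hinner ω m
    have h3 := sum_norm_sq_le_fullOp A (xδ ω m - xdag)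
    have h3' : 2 * μ / ‖fullOp A‖ ^ 2 * ∑ i, ‖A i (xδ ω m - xdag)‖ ^ 2
        ≤ 2 * μ * ‖xδ ω m - xdag‖ ^ 2 := by
      calc _ ≤ 2 * μ / ‖fullOp A‖ ^ 2 * (‖fullOp A‖ ^ 2 * ‖xδ ω m - xdag‖ ^ 2) := by gcongr
        _ = _ := by rw [← mul_assoc, div_mul_cancel₀ _ hL.ne']
    have h4 : ∑ i, S (m + 1) (Function.update ω m i)
        = (∑ i, ∑ j, (η j)⁻¹ * ‖Function.update (z ω m) i (z ω m i
          - η i • (A i (xδ ω m - xdag) + (A i xdag - yδ i))) j - lamdag j‖ ^ 2)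
          + 2 * (((m : ℝ) + 1) * Δ ω m) := by
      simp only [S, Z, hzu, Δ, Nat.add_sub_cancel, hxu ω m _ m le_rfl, hξu ω m _ m le_rfl,
        Finset.sum_add_distrib, Finset.sum_const, Finset.card_univ, Fintype.card_fin,
        nsmul_eq_mul]
      push_cast
      field_simp
    have h5 : 0 ≤ 2 / p * (m * Δ ω (m - 1)) := by
      have := hΔ0 ω (m - 1)
      positivity
    have h6 : ∑ i, S (m + 1) (Function.update ω m i)
        ≤ (p + p / N) * Z ω m + 2 * (m * Δ ω (m - 1)) + (N / p + 1) * K * δ ^ 2 := by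
      rw [inv_div] at h1
      rw [h4]
      simp only [Z] at h1 ⊢
      linarith
    calc (∑ i, S (m + 1) (Function.update ω m i)) / p
        ≤ ((p + p / N) * Z ω m + 2 * (m * Δ ω (m - 1)) + (N / p + 1) * K * δ ^ 2) / p := by
          gcongr
      _ = (1 + N⁻¹) * Z ω m + 2 / p * (m * Δ ω (m - 1)) + B := by
          rw [hB]
          field_simp
      _ ≤ (1 + N⁻¹) * S m ω + B := by
          have : 0 ≤ N⁻¹ * (2 / p * (m * Δ ω (m - 1))) := by positivity
          simp only [S]
          linarith
  have hrec : ∀ m, avg p hp (m + 1) (S (m + 1)) ≤ (1 + N⁻¹) * avg p hp m (S m) + B := by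
    intro m
    rw [avg_succ, ← avg_mul_add]
    exact avg_mono p hp m (hpath m)
  set M := ∑ i, (η i)⁻¹ * ‖lamdag i‖ ^ 2 with hM
  have hM0 : 0 ≤ M :=
    Finset.sum_nonneg fun j _ => mul_nonneg (inv_nonneg.2 (hη j).le) (sq_nonneg _)
  have hinit : avg p hp 0 (S 0) ≤ M := by
    simp [avg, S, Z, z, shiftedDual, hM]
  have hbound := le_pow_mul_of_recursion (T := fun m => avg p hp m (S m)) (q := 1 + N⁻¹)
    (by linarith [inv_pos.2 hN0]) hB0 hinit hrec (n + 1)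
  have hthree := one_add_inv_pow_le_three (n + 1)
  have hbound' : avg p hp (n + 1) (S (n + 1)) ≤ 3 * (M + N * B) :=
    hbound.trans (by gcongr)
  have hlow : 2 * N * μ / p * avg p hp n (fun ω => ‖xδ ω n - xdag‖ ^ 2)
      ≤ avg p hp (n + 1) (S (n + 1)) := by
    have h1 := avg_succ_of_update_eq p hp n (fun ω => ‖xδ ω n - xdag‖ ^ 2)
      (fun ω i => by rw [hxu ω n i n le_rfl])
    have h2 := avg_mul_add p hp (n + 1) (fun ω => ‖xδ ω n - xdag‖ ^ 2) (2 * N * μ / p) 0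
    rw [← h1, ← add_zero (_ * _), ← h2]
    refine avg_mono p hp _ fun ω => ?_
    have h3 := hΔ ω n
    have h4 := hZ0 ω (n + 1)
    have h5 : 2 / p * (N * (μ * ‖xδ ω n - xdag‖ ^ 2)) ≤ 2 / p * (N * Δ ω n) := by gcongr
    simp only [S, Nat.add_sub_cancel]
    calc _ = 2 / p * (N * (μ * ‖xδ ω n - xdag‖ ^ 2)) := by ring
      _ ≤ _ := by linarith
  have hfinal := hlow.trans hbound'
  have hNn : (n : ℝ) + 1 = N := by rw [hN]; push_cast; rfl
  rw [hNn]
  have hc : 0 < 2 * N * μ / p := by positivity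
  rw [← mul_le_mul_iff_right₀ hc]
  refine hfinal.trans (le_of_eq ?_)
  rw [hB]
  field_simp

/-- **Theorem (rate of convergence for the dual stochastic heavy-ball method in Banach
spaces).**  There is a constant `C = C (p, μ, ‖A‖², η) > 0` depending only on `μ`,
`‖A‖²` and the step sizes `η i` such that: for every instance (Banach space `X`,
Hilbert spaces `Y i`, operators `A i`, `R : X → (−∞,∞]` proper, lower semicontinuous
and `μ`-strongly convex, exact data `y` whose `R`-minimizing solution is `x†`, noisy
data `y^δ` of total level `δ`, steps `0 < η i < 2μ/‖A‖²`) satisfying the source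
condition `∃ λ†, A^*λ† ∈ ∂R(x†)` and with dual stochastic heavy-ball iterates
`(ξ_n^δ, x_n^δ)` (each `x_n^δ` minimizing `x ↦ R x − ⟨ξ_n^δ, x⟩`), one has for all
`n ≥ 0`, `E[‖x_n^δ − x†‖²] ≤ C (p M₀/(n+1) + (n+1) δ²/p + δ²)` with
`M₀ = ∑_i (1/η i) ‖λ† i‖²`.  Consequently there is a constant
`C' = C' (p, μ, ‖A‖², η, M₀, c₁, c₂)` such that whenever the stopping index satisfies
`c₁ δ⁻¹ ≤ (n_δ + 1)/p ≤ c₂ δ⁻¹` (with `0 < δ ≤ 1`, `0 < c₁ ≤ c₂`), one has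
`E[‖x_{n_δ}^δ − x†‖²] ≤ C' δ`, i.e. `E[‖x_{n_δ}^δ − x†‖²] = O(δ)`. -/
theorem stmt_17 :
    ∃ (C : (p : ℕ) → ℝ → ℝ → (Fin p → ℝ) → ℝ)
      (C' : (p : ℕ) → ℝ → ℝ → (Fin p → ℝ) → ℝ → ℝ → ℝ → ℝ),
      ∀ (p : ℕ) (hp : 0 < p)
        (X : Type) (_ : NormedAddCommGroup X), ∀ (_ : NormedSpace ℝ X)
        (Y : Fin p → Type) (_ : ∀ i, NormedAddCommGroup (Y i)),
        ∀ (_ : ∀ i, InnerProductSpace ℝ (Y i)) (_ : ∀ i, CompleteSpace (Y i))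
        (A : ∀ i, X →L[ℝ] Y i) (μ : ℝ) (R : X → EReal)
        (y yδ : ∀ i, Y i) (δi : Fin p → ℝ) (δ : ℝ)
        (η : Fin p → ℝ) (xdag : X) (lamdag : ∀ j, Y j) (M₀ : ℝ)
        (ξ : (ℕ → Fin p) → ℕ → X →L[ℝ] ℝ) (xδ : (ℕ → Fin p) → ℕ → X),
        0 < μ →
        -- `R` is proper
        (∀ x, R x ≠ ⊥) → (∃ x, R x ≠ ⊤) →
        -- `R` is lower semicontinuous
        LowerSemicontinuous R →
        -- `R` is `μ`-strongly convex
        (∀ xb x : X, R xb ≠ ⊤ → R x ≠ ⊤ → ∀ t : ℝ, 0 ≤ t → t ≤ 1 →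
          R (t • xb + (1 - t) • x) + ((μ * t * (1 - t) * ‖xb - x‖ ^ 2 : ℝ) : EReal)
            ≤ (t : EReal) * R xb + ((1 - t : ℝ) : EReal) * R x) →
        -- `x†` is the `R`-minimizing solution of the system `A_i x = y_i`
        (∀ i, (A i) xdag = y i) → R xdag ≠ ⊤ →
        (∀ x : X, (∀ i, (A i) x = y i) → R xdag ≤ R x) →
        -- noisy data with total noise level `δ`
        (∀ i, ‖yδ i - y i‖ ≤ δi i) →
        δ = Real.sqrt (∑ i, (δi i) ^ 2) →
        -- the step sizes satisfy `0 < η i < 2 μ / ‖A‖²`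
        (∀ i, 0 < η i ∧ η i < 2 * μ / ‖fullOp A‖ ^ 2) →
        -- source condition: `A^* λ† ∈ ∂R(x†)`
        (∀ x : X, R xdag + (((∑ i, banachAdjoint (A i) (lamdag i)) (x - xdag) : ℝ) : EReal)
          ≤ R x) →
        M₀ = ∑ i, (η i)⁻¹ * ‖lamdag i‖ ^ 2 →
        -- the dual stochastic heavy-ball iteration
        (∀ ω, ξ ω 0 = 0) →
        (∀ ω, ∀ n : ℕ, ξ ω (n + 1) = ξ ω n
          - (((n : ℝ) + 2)⁻¹ * η (ω n)) •
              banachAdjoint (A (ω n)) ((A (ω n)) (xδ ω n) - yδ (ω n))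
          + ((n : ℝ) / ((n : ℝ) + 2)) • (ξ ω n - ξ ω (n - 1))) →
        -- `x_n^δ` is a minimizer of `x ↦ R x − ⟨ξ_n^δ, x⟩`
        (∀ ω, ∀ n : ℕ, ∀ x : X,
          R (xδ ω n) - (((ξ ω n) (xδ ω n) : ℝ) : EReal) ≤ R x - (((ξ ω n) x : ℝ) : EReal)) →
        (0 < C p μ (‖fullOp A‖ ^ 2) η ∧
          ∀ n : ℕ,
            avg p hp n (fun ω => ‖xδ ω n - xdag‖ ^ 2)
              ≤ C p μ (‖fullOp A‖ ^ 2) η *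
                  (p * M₀ / ((n : ℝ) + 1) + ((n : ℝ) + 1) * δ ^ 2 / p + δ ^ 2)) ∧
        ∀ (c₁ c₂ : ℝ) (nδ : ℕ), 0 < c₁ → c₁ ≤ c₂ → 0 < δ → δ ≤ 1 →
          c₁ * δ⁻¹ ≤ ((nδ : ℝ) + 1) / p → ((nδ : ℝ) + 1) / p ≤ c₂ * δ⁻¹ →
          avg p hp nδ (fun ω => ‖xδ ω nδ - xdag‖ ^ 2)
            ≤ C' p μ (‖fullOp A‖ ^ 2) η M₀ c₁ c₂ * δ := by
  refine ⟨fun p μ L η => 3 / (2 * μ) * (1 + noiseFactor μ L η),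
    fun p μ L η M₀ c₁ c₂ => 3 / (2 * μ) * (1 + noiseFactor μ L η) * (M₀ / c₁ + c₂ + 1), ?_⟩
  intro p hp X _ _ Y _ _ _ A μ R y yδ δi δ η xdag lamdag M₀ ξ xδ hμ hbot _ _ hconv hsol hdag _
    hnoise hδ hη hsource hM₀ hξ0 hξ hmin
  have hp0 : (0 : ℝ) < p := by exact_mod_cast hp
  have hL : 0 < ‖fullOp A‖ ^ 2 := by
    refine lt_of_le_of_ne (sq_nonneg _) fun h => ?_
    have := hη ⟨0, hp⟩
    rw [← h, div_zero] at this
    linarith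
  have hηL : ∀ i, η i * ‖fullOp A‖ ^ 2 < 2 * μ := fun i => (lt_div_iff₀ hL).1 (hη i).2
  have hδsq : ∑ i, ‖A i xdag - yδ i‖ ^ 2 ≤ δ ^ 2 := by
    rw [hδ, Real.sq_sqrt (Finset.sum_nonneg fun i _ => sq_nonneg _)]
    refine Finset.sum_le_sum fun i _ => ?_
    rw [hsol i, norm_sub_rev]
    gcongr
    exact hnoise i
  have hK : 0 ≤ noiseFactor μ (‖fullOp A‖ ^ 2) η := by
    refine le_trans ?_ (le_noiseFactor μ (‖fullOp A‖ ^ 2) η ⟨0, hp⟩)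
    have := (hη ⟨0, hp⟩).1
    have : 0 < 2 * μ - η ⟨0, hp⟩ * ‖fullOp A‖ ^ 2 := by linarith [hηL ⟨0, hp⟩]
    positivity
  have hM0 : 0 ≤ M₀ := by
    rw [hM₀]
    exact Finset.sum_nonneg fun j _ => mul_nonneg (inv_nonneg.2 (hη j).1.le) (sq_nonneg _)
  have hmain : ∀ n : ℕ, avg p hp n (fun ω => ‖xδ ω n - xdag‖ ^ 2)
      ≤ 3 / (2 * μ) * (1 + noiseFactor μ (‖fullOp A‖ ^ 2) η)
        * (p * M₀ / ((n : ℝ) + 1) + ((n : ℝ) + 1) * δ ^ 2 / p + δ ^ 2) := by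
    intro n
    have h := avg_norm_sq_le hp hμ hbot hconv hdag hδsq hL (fun i => (hη i).1) hηL hsource
      (fun ω => ⟨hξ0 ω, hξ ω⟩) hmin n
    rw [← hM₀] at h
    refine h.trans ?_
    rw [mul_assoc]
    gcongr
    have h1 : 0 ≤ p * M₀ / ((n : ℝ) + 1) := by positivity
    have h2 : 0 ≤ ((n : ℝ) + 1) * δ ^ 2 / p := by positivity
    have h3 := mul_nonneg hK h1
    nlinarith [sq_nonneg δ]
  refine ⟨⟨by positivity, hmain⟩, ?_⟩
  intro c₁ c₂ n hc₁ _ hδ0 hδ1 hlow hupp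
  refine (hmain n).trans ?_
  beta_reduce
  rw [mul_assoc _ (M₀ / c₁ + c₂ + 1) δ]
  have h1 : p * M₀ / ((n : ℝ) + 1) ≤ M₀ / c₁ * δ := by
    have h : c₁ * p ≤ ((n : ℝ) + 1) * δ := by
      rw [le_div_iff₀ hp0, ← div_eq_mul_inv, div_mul_eq_mul_div, div_le_iff₀ hδ0] at hlow
      exact hlow
    rw [div_le_iff₀ (by positivity), div_mul_eq_mul_div, div_mul_eq_mul_div, le_div_iff₀ hc₁]
    nlinarith
  have h2 : ((n : ℝ) + 1) * δ ^ 2 / p ≤ c₂ * δ := by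
    calc ((n : ℝ) + 1) * δ ^ 2 / p = ((n : ℝ) + 1) / p * δ ^ 2 := by ring
      _ ≤ c₂ * δ⁻¹ * δ ^ 2 := by gcongr
      _ = c₂ * δ := by field_simp
  have h3 : δ ^ 2 ≤ δ := by nlinarith
  gcongr
  linarith
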